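/- Let w_n = |W_{2/3,n}|, the number of binary words of length n such that every maximal factor 0^a 1^b with a > 0 satisfies 2a > 3b. Then w_n = w_{n-1} + w_{n-3} + w_{n-5} for all n ≥ 5, with initial values w_0,...,w_4 = 1, 2, 3, 5, 8. -/

import Mathlib

/-- `isValid c d w` says every maximal factor of `w` of the form `0^a 1^b`
with `a > 0` satisfies `a * (c/d) > b`, i.e. `c*a > d*b`.
Here `false` plays the role of `0` and `true` of `1`; maximality is expressed
by requiring the prefix to end with `1` (or be empty) and the suffix to start
with `0` (or be empty). -/
def isValid (c d : ℕ) (w : List Bool) : Prop :=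
  ∀ p s : List Bool, ∀ a b : ℕ,
    w = p ++ List.replicate a false ++ List.replicate b true ++ s →
    (p = [] ∨ p.getLast? = some true) →
    (s = [] ∨ s.head? = some false) →
    0 < a → d * b < c * a

/-- number of words of length `n` in `W_{c/d,n}` -/
noncomputable def wcount (c d n : ℕ) : ℕ :=
  Nat.card {w : List Bool // w.length = n ∧ isValid c d w}

/-!
Let `m(k) = ⌊dk/c⌋ + 1` be the least `a` with `ca > dk`. A valid word of length `n` other than `1^n`
ends in `0^a 1^k` with `a ≥ m(k)`, so it has the form `v 0^{m(k)} 1^k`, and such a word is valid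
exactly when `v` is: zeros in excess of `m(k)` just become the final zeros of `v`, which constrain
nothing. Hence `w_n = 1 + ∑_k w_{n - m(k) - k}`. Since `m(c + k) = d + m(k)`, the terms of this sum
with `k ≥ c`, together with the `1`, form the same expression for `w_{n-c-d}`.
-/

section ListRuns

variable {α : Type*}

theorem exists_eq_append_replicate (x : α) (w : List α) :
    ∃ u m, u.getLast? ≠ some x ∧ w = u ++ List.replicate m x := by
  induction w using List.reverseRecOn with
  | nil => exact ⟨[], 0, by simp, rfl⟩
  | append_singleton l y ih =>
    by_cases hy : y = x
    · obtain ⟨u, m, hu, rfl⟩ := ih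
      exact ⟨u, m + 1, hu, by rw [hy, List.replicate_succ', List.append_assoc]⟩
    · exact ⟨l ++ [y], 0, by simpa using hy, by simp⟩

theorem le_of_append_replicate_eq {x : α} {u v : List α} {a b : ℕ} (hv : v.getLast? ≠ some x)
    (h : u ++ List.replicate a x = v ++ List.replicate b x) : a ≤ b := by
  rcases List.append_eq_append_iff.mp h with ⟨t, rfl, ht⟩ | ⟨t, -, ht⟩
  · obtain ⟨-, ht', -⟩ := List.append_eq_replicate_iff.mp ht.symm
    have ht_nil : t = [] := by
      by_contra hne
      apply hv
      rw [List.getLast?_append, ht', List.getLast?_replicate,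
        if_neg (by simpa using hne), Option.some_or]
    simpa [ht_nil] using (congrArg List.length ht).le
  · have hlen : b = t.length + a := by simpa using congrArg List.length ht
    exact hlen ▸ Nat.le_add_left a t.length

theorem eq_and_eq_of_append_replicate_eq {x : α} {u v : List α} {a b : ℕ}
    (hu : u.getLast? ≠ some x) (hv : v.getLast? ≠ some x)
    (h : u ++ List.replicate a x = v ++ List.replicate b x) : u = v ∧ a = b := by
  obtain rfl : a = b :=
    (le_of_append_replicate_eq hv h).antisymm (le_of_append_replicate_eq hu h.symm)
  exact ⟨List.append_cancel_right h, rfl⟩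

theorem getLast?_append_replicate_ne {x y : α} (hxy : x ≠ y) (u : List α) {a : ℕ} (ha : a ≠ 0) :
    (u ++ List.replicate a x).getLast? ≠ some y := by
  simp [List.getLast?_append, List.getLast?_replicate, ha, hxy]

theorem exists_eq_append_of_descent [Preorder α] {u v s l : List α} {y z : α}
    (hl : l.Pairwise (· ≤ ·)) (h : v ++ l = u ++ s) (hy : u.getLast? = some y)
    (hz : s.head? = some z) (hzy : ¬ y ≤ z) : ∃ t, v = u ++ t ∧ s = t ++ l := by
  rcases List.append_eq_append_iff.mp h with ⟨t, rfl, rfl⟩ | ht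
  · rcases eq_or_ne t [] with rfl | ht_ne
    · exact ⟨[], by simp⟩
    · rw [List.getLast?_append_of_ne_nil _ ht_ne] at hy
      exact absurd ((List.pairwise_append.mp hl).2.2 y (List.mem_of_getLast? hy) z
        (List.mem_of_head? hz)) hzy
  · exact ht

end ListRuns

section Validity

variable {c d : ℕ}

theorem isValid_iff {w : List Bool} :
    isValid c d w ↔ ∀ (p s : List Bool) (a b : ℕ),
      w = p ++ List.replicate a false ++ List.replicate b true ++ s →
      p.getLast? ≠ some false → s.head? ≠ some true → 0 < a → d * b < c * a := by
  have getLast?_iff (p : List Bool) :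
      p = [] ∨ p.getLast? = some true ↔ p.getLast? ≠ some false := by
    rw [← List.getLast?_eq_none_iff]
    rcases p.getLast? with _ | _ | _ <;> simp
  have head?_iff (s : List Bool) : s = [] ∨ s.head? = some false ↔ s.head? ≠ some true := by
    rw [← List.head?_eq_none_iff]
    rcases s.head? with _ | _ | _ <;> simp
  simp only [isValid, getLast?_iff, head?_iff]

theorem isValid_replicate_true (n : ℕ) : isValid c d (List.replicate n true) := by
  intro p s a b h _ _ ha
  have false_mem : false ∈ List.replicate n true := by simp [h, ha.ne']
  simp at false_mem

theorem isValid_append_zeros_ones_iff {v : List Bool} {a b : ℕ} (hab : d * b < c * a) :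
    isValid c d (v ++ (List.replicate a false ++ List.replicate b true)) ↔ isValid c d v := by
  have ha : a ≠ 0 := by rintro rfl; simp at hab
  simp only [isValid_iff]
  constructor
  · rintro h p s a' b' rfl hp hs ha'
    refine h p (s ++ (List.replicate a false ++ List.replicate b true)) a' b' (by simp) hp ?_ ha'
    rcases s with _ | ⟨x, s⟩
    · simp [List.head?_append, List.head?_replicate, ha]
    · simpa using hs
  · intro h p s a' b' hw hp hs ha'
    rcases eq_or_ne b' 0 with rfl | hb'
    · simpa using Nat.mul_pos (Nat.pos_of_mul_pos_right ((Nat.zero_le _).trans_lt hab)) ha'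
    rcases s with _ | ⟨_ | _, s⟩
    · rw [List.append_nil, ← List.append_assoc] at hw
      obtain ⟨hzeros, rfl⟩ := eq_and_eq_of_append_replicate_eq
        (getLast?_append_replicate_ne (by decide) _ ha)
        (getLast?_append_replicate_ne (by decide) _ ha'.ne') hw
      exact hab.trans_le (Nat.mul_le_mul_left c (le_of_append_replicate_eq hp hzeros))
    -- A `1` followed by a `0` cannot occur inside `0^a 1^b`, so the factor lies within `v`.
    · have hsorted : (List.replicate a false ++ List.replicate b true).Pairwise (· ≤ ·) := by
        simp [List.pairwise_append, List.pairwise_replicate]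
      obtain ⟨t, rfl, ht⟩ := exists_eq_append_of_descent (y := true) hsorted hw
        (by simp [List.getLast?_append, List.getLast?_replicate, hb']) rfl (by decide)
      refine h p t a' b' rfl hp ?_ ha'
      rcases t with _ | ⟨x, t⟩
      · simp
      · obtain rfl : false = x := (List.cons.inj ht).1
        simp
    · simp at hs

end Validity

section MinBlock

/-- The least `a` with `c * a > d * k`: the number of zeros needed before a maximal run of `k` ones
in a valid word that has a zero before that run. For `c = 0` there is no such `a`, and the value `1`
is meaningless. -/
def minZeros (c d k : ℕ) : ℕ := d * k / c + 1

/-- The shortest `0^a 1^k` with `a > 0` that can be a maximal factor of a valid word, for `c > 0`;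
valid words other than `1^n` are counted by stripping such a block from their end. -/
def minBlock (c d k : ℕ) : List Bool :=
  List.replicate (minZeros c d k) false ++ List.replicate k true

variable {c d : ℕ}

theorem minZeros_ne_zero (c d k : ℕ) : minZeros c d k ≠ 0 := Nat.succ_ne_zero _

theorem minZeros_le_iff (hc : 0 < c) {a b : ℕ} : minZeros c d b ≤ a ↔ d * b < c * a := by
  rw [minZeros, Nat.succ_le_iff, Nat.div_lt_iff_lt_mul hc, mul_comm a]

theorem minZeros_add_add (hc : 0 < c) (k : ℕ) :
    minZeros c d (c + k) + (c + k) = c + d + (minZeros c d k + k) := by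
  rw [minZeros, mul_add, mul_comm d c, Nat.mul_add_div hc, minZeros]
  ring

theorem minZeros_add_le_of_lt {k : ℕ} (hk : k < c) : minZeros c d k + k ≤ c + d := by
  have : d * k / c ≤ d := Nat.div_le_of_le_mul (by rw [mul_comm c]; gcongr)
  rw [minZeros]
  omega

theorem lt_minZeros_add_of_le (hc : 0 < c) {k : ℕ} (hk : c ≤ k) : c + d < minZeros c d k + k := by
  obtain ⟨j, rfl⟩ := Nat.exists_eq_add_of_le hk
  rw [minZeros_add_add hc]
  have := Nat.pos_of_ne_zero (minZeros_ne_zero c d j)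
  omega

theorem length_minBlock (c d k : ℕ) : (minBlock c d k).length = minZeros c d k + k := by
  simp [minBlock]

theorem append_minBlock_ne_replicate_true (v : List Bool) (k n : ℕ) :
    v ++ minBlock c d k ≠ List.replicate n true := by
  intro h
  have false_mem : false ∈ List.replicate n true := by simp [← h, minBlock, minZeros_ne_zero]
  simp at false_mem

theorem eq_of_append_minBlock_eq {v v' : List Bool} {k k' : ℕ}
    (h : v ++ minBlock c d k = v' ++ minBlock c d k') : k = k' := by
  simp only [minBlock, ← List.append_assoc] at h
  exact (eq_and_eq_of_append_replicate_eq
    (getLast?_append_replicate_ne (by decide) _ (minZeros_ne_zero c d k))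
    (getLast?_append_replicate_ne (by decide) _ (minZeros_ne_zero c d k')) h).2

theorem isValid_append_minBlock_iff (hc : 0 < c) {v : List Bool} {k : ℕ} :
    isValid c d (v ++ minBlock c d k) ↔ isValid c d v :=
  isValid_append_zeros_ones_iff ((minZeros_le_iff hc).mp le_rfl)

theorem exists_eq_append_minBlock (hc : 0 < c) {w : List Bool} (hw : isValid c d w)
    (hones : w ≠ List.replicate w.length true) : ∃ v k, w = v ++ minBlock c d k := by
  obtain ⟨u, b, hu, rfl⟩ := exists_eq_append_replicate true w
  obtain ⟨p, a, hp, rfl⟩ := exists_eq_append_replicate false u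
  have ha : a ≠ 0 := by
    rintro rfl
    rw [List.replicate_zero, List.append_nil] at hu hones
    have hp_nil : p = [] := by
      rw [← List.getLast?_eq_none_iff]
      rcases hlast : p.getLast? with _ | _ | _ <;> simp_all
    simp [hp_nil] at hones
  have hle : minZeros c d b ≤ a := (minZeros_le_iff hc).mpr <|
    isValid_iff.mp hw p [] a b (by simp) hp (by simp) (Nat.pos_of_ne_zero ha)
  obtain ⟨j, rfl⟩ := Nat.exists_eq_add_of_le' hle
  exact ⟨p ++ List.replicate j false, b, by
    simp only [minBlock, List.replicate_add, List.append_assoc]⟩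

end MinBlock

section Counting

open Finset

/-- The set `W_{c/d,n}` of valid words of length `n`, as a `Finset` so that the disjoint union below
can be counted with `Finset.card_biUnion`. -/
noncomputable def validWords (c d n : ℕ) : Finset (List Bool) :=
  ((List.finite_length_eq Bool n).inter_of_left {w | isValid c d w}).toFinset

variable {c d n N : ℕ}

theorem mem_validWords {w : List Bool} :
    w ∈ validWords c d n ↔ w.length = n ∧ isValid c d w := by
  simp [validWords]

theorem wcount_eq_card_validWords (c d n : ℕ) : wcount c d n = #(validWords c d n) :=
  Nat.card_eq_card_finite_toFinset _

theorem validWords_eq_insert_biUnion (hc : 0 < c) (hN : n ≤ N) :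
    validWords c d n = insert (List.replicate n true)
      ({k ∈ range N | minZeros c d k + k ≤ n}.biUnion fun k ↦
        (validWords c d (n - (minZeros c d k + k))).image (· ++ minBlock c d k)) := by
  ext w
  simp only [mem_insert, mem_biUnion, mem_filter, mem_range, mem_image, mem_validWords]
  constructor
  · rintro ⟨rfl, hw⟩
    by_cases hones : w = List.replicate w.length true
    · exact .inl hones
    · obtain ⟨v, k, rfl⟩ := exists_eq_append_minBlock hc hw hones
      have := Nat.pos_of_ne_zero (minZeros_ne_zero c d k)
      rw [List.length_append, length_minBlock] at hN ⊢
      exact .inr ⟨k, ⟨by omega, by omega⟩, v,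
        ⟨by omega, (isValid_append_minBlock_iff hc).mp hw⟩, rfl⟩
  · rintro (rfl | ⟨k, ⟨-, hk⟩, v, ⟨hlen, hv⟩, rfl⟩)
    · exact ⟨List.length_replicate, isValid_replicate_true n⟩
    · refine ⟨?_, (isValid_append_minBlock_iff hc).mpr hv⟩
      rw [List.length_append, length_minBlock, hlen, Nat.sub_add_cancel hk]

theorem wcount_eq_one_add_sum (hc : 0 < c) (hN : n ≤ N) :
    wcount c d n =
      1 + ∑ k ∈ range N with minZeros c d k + k ≤ n, wcount c d (n - (minZeros c d k + k)) := by
  rw [wcount_eq_card_validWords, validWords_eq_insert_biUnion hc hN, card_insert_of_notMem,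
    card_biUnion, add_comm]
  · congr! 2 with k
    rw [card_image_of_injective _ (List.append_left_injective _), wcount_eq_card_validWords]
  · intro k _ k' _ hkk'
    simp only [Function.onFun, disjoint_left, mem_image]
    rintro _ ⟨v, -, rfl⟩ ⟨v', -, h⟩
    exact hkk' (eq_of_append_minBlock_eq h.symm)
  · simp only [mem_biUnion, mem_image, not_exists, not_and]
    exact fun k _ v _ ↦ append_minBlock_ne_replicate_true v k n

theorem wcount_of_lt (hc : 0 < c) (hn : n < c + d) :
    wcount c d n =
      1 + ∑ k ∈ range c with minZeros c d k + k ≤ n, wcount c d (n - (minZeros c d k + k)) := by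
  rw [wcount_eq_one_add_sum hc (Nat.le_add_left n c)]
  congr! 2
  ext k
  simp only [mem_filter, mem_range]
  refine ⟨fun ⟨_, hk⟩ ↦ ⟨?_, hk⟩, fun ⟨hkc, hk⟩ ↦ ⟨Nat.lt_add_right n hkc, hk⟩⟩
  by_contra! hck
  exact (hk.trans_lt hn).not_gt (lt_minZeros_add_of_le hc hck)

theorem wcount_of_le (hc : 0 < c) (hn : c + d ≤ n) :
    wcount c d n =
      ∑ k ∈ range c, wcount c d (n - (minZeros c d k + k)) + wcount c d (n - (c + d)) := by
  have first_terms : ∀ k ∈ range c, minZeros c d k + k ≤ n := fun k hk ↦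
    (minZeros_add_le_of_lt (mem_range.mp hk)).trans hn
  have later_terms : (1 + ∑ k ∈ range n, if minZeros c d (c + k) + (c + k) ≤ n then
      wcount c d (n - (minZeros c d (c + k) + (c + k))) else 0) = wcount c d (n - (c + d)) := by
    rw [wcount_eq_one_add_sum hc (Nat.sub_le n (c + d)), sum_filter]
    simp only [minZeros_add_add hc, Nat.sub_sub, Nat.le_sub_iff_add_le' hn]
  rw [wcount_eq_one_add_sum hc (Nat.le_add_left n c), sum_filter, sum_range_add, ← sum_filter,
    filter_true_of_mem first_terms, add_left_comm, later_terms]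

end Counting

theorem stmt4_general {c d : ℕ} (hc : 0 < c) :
    (∀ n, c + d ≤ n → wcount c d n =
      ∑ k ∈ Finset.range c, wcount c d (n - (d * k / c + 1 + k)) + wcount c d (n - (c + d))) ∧
    ∀ n < c + d, wcount c d n =
      1 + ∑ k ∈ Finset.range c with d * k / c + 1 + k ≤ n, wcount c d (n - (d * k / c + 1 + k)) :=
  ⟨fun _ ↦ wcount_of_le hc, fun _ ↦ wcount_of_lt hc⟩

theorem wcount_two_three_of_lt {n : ℕ} (hn : n < 5) :
    wcount 2 3 n =
      1 + ((if 1 ≤ n then wcount 2 3 (n - 1) else 0) +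
        if 3 ≤ n then wcount 2 3 (n - 3) else 0) := by
  simpa [Finset.sum_filter, Finset.sum_range_succ]
    using (stmt4_general (c := 2) (d := 3) two_pos).2 n hn

theorem stmt4 :
    (∀ n : ℕ, 5 ≤ n →
      wcount 2 3 n = wcount 2 3 (n - 1) + wcount 2 3 (n - 3) + wcount 2 3 (n - 5)) ∧
    wcount 2 3 0 = 1 ∧ wcount 2 3 1 = 2 ∧ wcount 2 3 2 = 3 ∧ wcount 2 3 3 = 5 ∧
    wcount 2 3 4 = 8 :=
  ⟨by simpa [Finset.sum_range_succ] using (stmt4_general (c := 2) (d := 3) two_pos).1,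
    by simp [wcount_two_three_of_lt]⟩
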